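/- Let V₁, W₁ ∈ (0,1) and Q₁ = V₁(1+W₁)/(2W₁). Then: (i) if x is an even multiple of π, then H(x, 0) = 1/(1−W₁); (ii) if x is an odd multiple of π, then H(x, 0) = 1/(1−W₁) when V₁ ≤ W₁ and H(x, 0) = (1/(1+W₁))·(1+V₁)/(1−V₁) when V₁ ≥ W₁; (iii) if Q₁ ≤ 1 and cos x = −Q₁, then H(x, 0) = (1/(1−W₁))·(1−V₁²)/(1−Q₁V₁). -/

import Mathlib

/-- For parameters `V, W ∈ [0,1)`, the function
`f_{VW}(α, x) = (1 + V·cos(x + α))/(1 − W·cos α)`. -/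
noncomputable def fVW (V W α x : ℝ) : ℝ :=
    (1 + V * Real.cos (x + α)) / (1 - W * Real.cos α)

/-- `f^max_{VW}(x) = sup_{α ∈ ℝ} f_{VW}(α, x)`. -/
noncomputable def fVWmax (V W x : ℝ) : ℝ := ⨆ α : ℝ, fVW V W α x

/-- `H(x, β) = f^max_{V₁W₁}(x)/(1 + V₁·cos(x + β))`. -/
noncomputable def Hfun (V₁ W₁ x β : ℝ) : ℝ :=
    fVWmax V₁ W₁ x / (1 + V₁ * Real.cos (x + β))

lemma fVWmax_eq_of {V W x M : ℝ} (hW : W ∈ Set.Ioo (0 : ℝ) 1)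
    (hle : ∀ α, 1 + V * Real.cos (x + α) ≤ M * (1 - W * Real.cos α))
    (a : ℝ) (ha : 1 + V * Real.cos (x + a) = M * (1 - W * Real.cos a)) :
    fVWmax V W x = M := by
  have hpos : ∀ α, 0 < 1 - W * Real.cos α := fun α => by
    nlinarith [Real.cos_le_one α, hW.1, hW.2]
  have hb : ∀ α, fVW V W α x ≤ M := fun α => by
    unfold fVW
    rw [div_le_iff₀ (hpos α)]
    exact hle α
  refine le_antisymm (ciSup_le hb) ?_
  have h := le_ciSup (f := fun α => fVW V W α x) ⟨M, by rintro _ ⟨α, rfl⟩; exact hb α⟩ a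
  have e : fVW V W a x = M := by
    unfold fVW
    rw [ha, mul_div_assoc, div_self (hpos a).ne', mul_one]
  simp only [e] at h
  exact h

lemma exists_angle {c s : ℝ} (h : c ^ 2 + s ^ 2 = 1) :
    ∃ a : ℝ, Real.cos a = c ∧ Real.sin a = s := by
  have hn : ‖(⟨c, s⟩ : ℂ)‖ = 1 := by
    rw [Complex.norm_def, Complex.normSq_mk, ← sq, ← sq, h, Real.sqrt_one]
  have hz : (⟨c, s⟩ : ℂ) ≠ 0 := by
    intro h0
    rw [h0] at hn
    simp at hn
  refine ⟨Complex.arg ⟨c, s⟩, ?_, ?_⟩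
  · rw [Complex.cos_arg hz, hn, div_one]
  · rw [Complex.sin_arg, hn, div_one]

/-- Let `V₁, W₁ ∈ (0,1)` and `Q₁ = V₁(1+W₁)/(2W₁)`.
(i) if `x` is an even multiple of `π`, then `H(x,0) = 1/(1−W₁)`;
(ii) if `x` is an odd multiple of `π`, then `H(x,0) = 1/(1−W₁)` when `V₁ ≤ W₁`
and `H(x,0) = (1/(1+W₁))·(1+V₁)/(1−V₁)` when `V₁ ≥ W₁`;
(iii) if `Q₁ ≤ 1` and `cos x = −Q₁`, then
`H(x,0) = (1/(1−W₁))·(1−V₁²)/(1−Q₁V₁)`. -/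
theorem Hfun_zero_values (V₁ W₁ : ℝ)
    (hV : V₁ ∈ Set.Ioo (0 : ℝ) 1) (hW : W₁ ∈ Set.Ioo (0 : ℝ) 1) :
    let Q₁ : ℝ := V₁ * (1 + W₁) / (2 * W₁)
    (∀ x : ℝ, (∃ k : ℤ, x = 2 * k * Real.pi) → Hfun V₁ W₁ x 0 = 1 / (1 - W₁)) ∧
    (∀ x : ℝ, (∃ k : ℤ, x = (2 * k + 1) * Real.pi) →
      (V₁ ≤ W₁ → Hfun V₁ W₁ x 0 = 1 / (1 - W₁)) ∧
      (V₁ ≥ W₁ → Hfun V₁ W₁ x 0 = (1 / (1 + W₁)) * ((1 + V₁) / (1 - V₁)))) ∧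
    (Q₁ ≤ 1 → ∀ x : ℝ, Real.cos x = -Q₁ →
      Hfun V₁ W₁ x 0 = (1 / (1 - W₁)) * ((1 - V₁ ^ 2) / (1 - Q₁ * V₁))) := by
  obtain ⟨hV0, hV1⟩ := hV
  have hW' := hW
  obtain ⟨hW0, hW1⟩ := hW
  have w1 : 0 < 1 - W₁ := by linarith
  have w2 : 0 < 1 + W₁ := by linarith
  have v1 : 0 < 1 - V₁ := by linarith
  have v2 : 0 < 1 + V₁ := by linarith
  intro Q
  refine ⟨?_, ?_, ?_⟩
  · rintro x ⟨k, rfl⟩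
    have hc : Real.cos (2 * k * Real.pi) = 1 := by
      rw [show (2 * k * Real.pi : ℝ) = k * (2 * Real.pi) by ring]
      exact Real.cos_int_mul_two_pi k
    have hs : Real.sin (2 * k * Real.pi) = 0 := by
      have := Real.sin_sq_add_cos_sq (2 * k * Real.pi)
      rw [hc] at this
      nlinarith
    have hM : fVWmax V₁ W₁ (2 * k * Real.pi) = (1 + V₁) / (1 - W₁) := by
      apply fVWmax_eq_of hW' _ 0
      · simp only [add_zero, hc, Real.cos_zero]
        field_simp
      · intro α
        rw [Real.cos_add, hc, hs, div_mul_eq_mul_div, le_div_iff₀ w1]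
        nlinarith [Real.cos_le_one α, mul_nonneg (add_pos hV0 hW0).le (sub_nonneg.2 (Real.cos_le_one α))]
    unfold Hfun
    rw [hM, add_zero, hc]
    field_simp
  · rintro x ⟨k, rfl⟩
    have hc : Real.cos ((2 * k + 1) * Real.pi) = -1 := by
      rw [show ((2 * k + 1) * Real.pi : ℝ) = k * (2 * Real.pi) + Real.pi by ring]
      exact Real.cos_int_mul_two_pi_add_pi k
    have hs : Real.sin ((2 * k + 1) * Real.pi) = 0 := by
      have := Real.sin_sq_add_cos_sq ((2 * k + 1) * Real.pi)
      rw [hc] at this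
      nlinarith
    constructor
    · intro hVW
      have hM : fVWmax V₁ W₁ ((2 * k + 1) * Real.pi) = (1 - V₁) / (1 - W₁) := by
        apply fVWmax_eq_of hW' _ 0
        · simp only [add_zero, hc, Real.cos_zero]
          field_simp
          ring
        · intro α
          rw [Real.cos_add, hc, hs, div_mul_eq_mul_div, le_div_iff₀ w1]
          nlinarith [mul_nonneg (sub_nonneg.2 hVW) (sub_nonneg.2 (Real.cos_le_one α))]
      unfold Hfun
      rw [hM, add_zero, hc, show 1 + V₁ * -1 = 1 - V₁ by ring]
      field_simp
    · intro hVW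
      have hM : fVWmax V₁ W₁ ((2 * k + 1) * Real.pi) = (1 + V₁) / (1 + W₁) := by
        apply fVWmax_eq_of hW' _ Real.pi
        · rw [Real.cos_add, hc, hs, Real.cos_pi]
          field_simp
          ring
        · intro α
          rw [Real.cos_add, hc, hs, div_mul_eq_mul_div, le_div_iff₀ w2]
          nlinarith [mul_nonneg (sub_nonneg.2 hVW) (by linarith [Real.neg_one_le_cos α] : 0 ≤ 1 + Real.cos α)]
      unfold Hfun
      rw [hM, add_zero, hc, show 1 + V₁ * -1 = 1 - V₁ by ring]
      field_simp
  · intro hQ x hx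
    have hQdef : Q * (2 * W₁) = V₁ * (1 + W₁) := by
      simp only [Q]
      field_simp
    clear_value Q
    have hQ0 : 0 < Q := by
      by_contra hn
      nlinarith [mul_pos hV0 w2]
    have hVW : V₁ ^ 2 < W₁ := by
      have h1 : V₁ * (1 + W₁) ≤ 2 * W₁ := by nlinarith
      have h2 : (V₁ * (1 + W₁)) ^ 2 ≤ (2 * W₁) ^ 2 := by
        apply pow_le_pow_left₀ (by positivity) h1
      have h3 : 0 < W₁ * (1 - W₁) ^ 2 := by positivity
      by_contra hn
      push Not at hn
      nlinarith [mul_le_mul_of_nonneg_right hn (sq_nonneg (1 + W₁))]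
    obtain ⟨M, hMdef⟩ : ∃ M, M = (1 - V₁ ^ 2) / (1 - W₁) := ⟨_, rfl⟩
    have hMe : M * (1 - W₁) = 1 - V₁ ^ 2 := by
      rw [hMdef]
      field_simp
    have hM1 : 0 < M - 1 := by
      rw [hMdef, sub_pos, lt_div_iff₀ w1]
      linarith
    have hsc := Real.sin_sq_add_cos_sq x
    have key : (V₁ * Real.cos x + M * W₁) ^ 2 + (-(V₁ * Real.sin x)) ^ 2 = (M - 1) ^ 2 := by
      have e : (V₁ * Real.cos x + M * W₁) ^ 2 + (-(V₁ * Real.sin x)) ^ 2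
          = V₁ ^ 2 - M * V₁ * (Q * (2 * W₁)) + M ^ 2 * W₁ ^ 2 := by
        rw [hx] at hsc ⊢
        linear_combination V₁ ^ 2 * hsc
      rw [e, hQdef]
      linear_combination (-M * (1 + W₁) + 1) * hMe
    have hM : fVWmax V₁ W₁ x = M := by
      obtain ⟨a, hca, hsa⟩ := exists_angle (c := (V₁ * Real.cos x + M * W₁) / (M - 1))
        (s := (-(V₁ * Real.sin x)) / (M - 1)) (by
          rw [div_pow, div_pow, ← add_div, key, div_self (by positivity)])
      apply fVWmax_eq_of hW' _ a
      · have e : (V₁ * Real.cos x + M * W₁) * Real.cos a + (-(V₁ * Real.sin x)) * Real.sin a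
            = M - 1 := by
          rw [hca, hsa, mul_div_assoc', mul_div_assoc', ← add_div, ← sq, ← sq, key]
          field_simp
        rw [Real.cos_add]
        linear_combination e
      · intro α
        have h : (V₁ * Real.cos x + M * W₁) * Real.cos α + (-(V₁ * Real.sin x)) * Real.sin α
            ≤ M - 1 := by
          refine abs_le_of_sq_le_sq' ?_ hM1.le |>.2
          rw [← key]
          have := Real.sin_sq_add_cos_sq α
          generalize V₁ * Real.cos x + M * W₁ = A
          generalize -(V₁ * Real.sin x) = B
          have e : A ^ 2 + B ^ 2 = (A * Real.cos α + B * Real.sin α) ^ 2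
            + (A * Real.sin α - B * Real.cos α) ^ 2 := by
            linear_combination (-(A ^ 2 + B ^ 2)) * this
          rw [e]
          linarith [sq_nonneg (A * Real.sin α - B * Real.cos α)]
        rw [Real.cos_add]
        linarith
    unfold Hfun
    rw [hM, add_zero, hx, hMdef, show 1 + V₁ * -Q = 1 - Q * V₁ by ring]
    rw [div_div, div_mul_div_comm, one_mul]
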